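/- Let a, b, c, d, e : ℤ → ℝ satisfy a_n < b_n < c_n < d_n < e_n and e_n ≤ a_{n+1} for all n ∈ ℤ. For reals u < v < w < x define T(u,v,w,x) = (1/√(r·r'))·[[O', −(O·O' + r·r')], [1, −O]] ∈ SL(2,ℝ), where O = (u+v)/2, r = (v−u)/2, O' = (w+x)/2, r' = (x−w)/2, and set f_n = T(a_n, b_n, c_n, d_n), g_n = T(b_n, c_n, d_n, e_n), and let G be the subgroup of SL(2,ℝ) generated by {f_n, g_n : n ∈ ℤ}. Then G acts properly discontinuously on the upper half-plane ℍ: for all compact subsets K, L ⊆ ℍ, the set {γ ∈ G : (γ·K) ∩ L ≠ ∅} is finite. -/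

import Mathlib

/-- For reals `u < v < w < x`, the matrix
`T(u,v,w,x) = (1/√(r·r'))·[[O', −(O·O' + r·r')], [1, −O]]`, where `O = (u+v)/2`,
`r = (v−u)/2`, `O' = (w+x)/2`, `r' = (x−w)/2`. -/
noncomputable def TMat (u v w x : ℝ) : Matrix (Fin 2) (Fin 2) ℝ :=
  (1 / Real.sqrt (((v - u) / 2) * ((x - w) / 2))) •
    !![(w + x) / 2,
        -(((u + v) / 2) * ((w + x) / 2) + ((v - u) / 2) * ((x - w) / 2));
        1, -((u + v) / 2)]

/-- Signed position of `z` relative to the half-circle over `[l, h]`. -/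
noncomputable def QQ (l h : ℝ) (z : UpperHalfPlane) : ℝ := (z.re - l) * (z.re - h) + z.im ^ 2

theorem QQ_normSq (l h : ℝ) (z : UpperHalfPlane) :
    Complex.normSq ((z : ℂ) - (((l + h) / 2 : ℝ) : ℂ)) = QQ l h z + ((h - l) / 2) ^ 2 := by
  simp only [Complex.normSq_apply, QQ, Complex.sub_re, Complex.sub_im, Complex.ofReal_re,
    Complex.ofReal_im, UpperHalfPlane.coe_re, UpperHalfPlane.coe_im]
  ring

theorem QQ_core (u v w x s : ℝ) (huv : u < v) (hwx : w < x) (hs : s ≠ 0)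
    (g : Matrix.SpecialLinearGroup (Fin 2) ℝ)
    (h00 : g 0 0 = s * ((w + x) / 2))
    (h01 : g 0 1 = -s * (((u + v) / 2) * ((w + x) / 2) + ((v - u) / 2) * ((x - w) / 2)))
    (h10 : g 1 0 = s) (h11 : g 1 1 = -s * ((u + v) / 2))
    (z : UpperHalfPlane) (hz : 0 < QQ u v z) : QQ w x (g • z) < 0 := by
  have hne : (z : ℂ) - (((u + v) / 2 : ℝ) : ℂ) ≠ 0 := by
    intro h0
    have := congrArg Complex.im h0
    simp only [Complex.sub_im, Complex.ofReal_im, Complex.zero_im, UpperHalfPlane.coe_im] at this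
    have := z.im_pos
    linarith
  have hsC : (s : ℂ) ≠ 0 := by exact_mod_cast hs
  have key : (((g • z : UpperHalfPlane) : ℂ) - (((w + x) / 2 : ℝ) : ℂ)) *
      ((z : ℂ) - (((u + v) / 2 : ℝ) : ℂ)) = ((-((v - u) / 2 * ((x - w) / 2)) : ℝ) : ℂ) := by
    rw [UpperHalfPlane.coe_specialLinearGroup_apply, h00, h01, h10, h11]
    have hd : (((algebraMap ℝ ℝ) s : ℝ) : ℂ) * z + (((algebraMap ℝ ℝ) (-s * ((u + v) / 2)) : ℝ) : ℂ)
        = s * ((z : ℂ) - (((u + v) / 2 : ℝ) : ℂ)) := by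
      simp only [Algebra.algebraMap_self, RingHom.id_apply]
      push_cast
      ring
    rw [hd, sub_mul, mul_comm (s : ℂ), ← div_div, div_mul_eq_mul_div, div_mul_eq_mul_div,
      mul_div_assoc, mul_comm]
    simp only [Algebra.algebraMap_self, RingHom.id_apply]
    field_simp
    push_cast
    ring
  have k2 := congrArg Complex.normSq key
  rw [Complex.normSq_mul, QQ_normSq, QQ_normSq, Complex.normSq_ofReal] at k2
  by_contra hcon
  push Not at hcon
  have hr : 0 < ((v - u) / 2) ^ 2 := by
    have : 0 < (v - u) / 2 := by linarith
    positivity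
  have hr' : 0 < ((x - w) / 2) ^ 2 := by
    have : 0 < (x - w) / 2 := by linarith
    positivity
  nlinarith [mul_nonneg hcon hz.le, mul_nonneg hcon hr.le, mul_pos hr' hz]

theorem TMat_det (u v w x : ℝ) (huv : u < v) (hwx : w < x) : (TMat u v w x).det = 1 := by
  have h : 0 < ((v - u) / 2) * ((x - w) / 2) := by
    apply mul_pos <;> linarith
  have h2 := Real.sq_sqrt h.le
  have h3 := Real.sqrt_pos.2 h
  rw [TMat, Matrix.det_smul, Matrix.det_fin_two_of, Fintype.card_fin, div_pow, h2, one_pow,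
    one_div, inv_mul_eq_one₀ h.ne']
  ring

theorem TMat_smul (u v w x : ℝ) (huv : u < v) (hwx : w < x)
    (g : Matrix.SpecialLinearGroup (Fin 2) ℝ)
    (hg : (g : Matrix (Fin 2) (Fin 2) ℝ) = TMat u v w x)
    (z : UpperHalfPlane) (hz : 0 < QQ u v z) : QQ w x (g • z) < 0 := by
  have h : 0 < ((v - u) / 2) * ((x - w) / 2) := by
    apply mul_pos <;> linarith
  have h3 := Real.sqrt_pos.2 h
  refine QQ_core u v w x _ huv hwx (one_div_pos.2 h3).ne' g ?_ ?_ ?_ ?_ z hz <;>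
  · rw [hg, TMat]
    simp
    try ring

theorem TMat_inv_smul (u v w x : ℝ) (huv : u < v) (hwx : w < x)
    (g : Matrix.SpecialLinearGroup (Fin 2) ℝ)
    (hg : (g : Matrix (Fin 2) (Fin 2) ℝ) = TMat u v w x)
    (z : UpperHalfPlane) (hz : 0 < QQ w x z) : QQ u v (g⁻¹ • z) < 0 := by
  have h : 0 < ((v - u) / 2) * ((x - w) / 2) := by
    apply mul_pos <;> linarith
  have h3 := Real.sqrt_pos.2 h
  refine QQ_core w x u v (-(1 / Real.sqrt (((v - u) / 2) * ((x - w) / 2)))) hwx huv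
    (neg_ne_zero.2 (one_div_pos.2 h3).ne') g⁻¹ ?_ ?_ ?_ ?_ z hz <;>
  · rw [Matrix.SpecialLinearGroup.coe_inv, hg, TMat, Matrix.adjugate_fin_two]
    simp
    try ring

theorem QQ_disj {l h l' h' : ℝ} (hl' : l' < h') (hd : h ≤ l' ∨ h' ≤ l)
    (z : UpperHalfPlane) (h1 : l < z.re) (h2 : z.re < h) : 0 < QQ l' h' z := by
  have := pow_pos z.im_pos 2
  unfold QQ
  rcases hd with hd | hd
  · nlinarith [mul_pos (show 0 < l' - z.re by linarith) (show 0 < h' - z.re by linarith)]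
  · nlinarith [mul_pos (show 0 < z.re - l' by linarith) (show 0 < z.re - h' by linarith)]

theorem QQ_mem {l h : ℝ} (hl : l < h) (z : UpperHalfPlane) (hz : QQ l h z < 0) :
    l < z.re ∧ z.re < h := by
  have := pow_pos z.im_pos 2
  unfold QQ at hz
  constructor <;> by_contra hc <;> push Not at hc
  · nlinarith [mul_nonneg (show 0 ≤ l - z.re by linarith) (show 0 ≤ h - z.re by linarith)]
  · nlinarith [mul_nonneg (show 0 ≤ z.re - l by linarith) (show 0 ≤ z.re - h by linarith)]

/-- Abstract ping-pong. -/
theorem pp_word {ι : Type*} (F : ι → Matrix.SpecialLinearGroup (Fin 2) ℝ)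
    (lo hi : ι × Bool → ℝ) (hlt : ∀ x, lo x < hi x)
    (hdis : ∀ x y, x ≠ y → hi x ≤ lo y ∨ hi y ≤ lo x)
    (hF : ∀ (x : ι × Bool) z, 0 < QQ (lo (x.1, !x.2)) (hi (x.1, !x.2)) z →
      QQ (lo x) (hi x) ((cond x.2 (F x.1) (F x.1)⁻¹) • z) < 0)
    (z : UpperHalfPlane) (hz : ∀ x, 0 < QQ (lo x) (hi x) z) :
    ∀ (L : List (ι × Bool)) (x : ι × Bool), FreeGroup.IsReduced (x :: L) →
      QQ (lo x) (hi x) ((((x :: L).map fun x => cond x.2 (F x.1) (F x.1)⁻¹).prod) • z) < 0 := by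
  intro L
  induction L with
  | nil =>
    intro x _
    simpa using hF x z (hz _)
  | cons y L ih =>
    intro x hx
    have hx' : (x.1 = y.1 → x.2 = y.2) ∧ FreeGroup.IsReduced (y :: L) := by
      simpa [FreeGroup.IsReduced] using hx
    have h1 := ih y hx'.2
    rw [List.map_cons, List.prod_cons, mul_smul]
    apply hF
    obtain ⟨h2, h3⟩ := QQ_mem (hlt y) _ h1
    refine QQ_disj (hlt _) (hdis y _ ?_) _ h2 h3
    intro he
    have e1 : y.1 = x.1 := by rw [he]
    have e2 : y.2 = !x.2 := by rw [he]
    have := hx'.1 e1.symm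
    rw [e2] at this
    cases hb : x.2 <;> simp [hb] at this

theorem pp_discrete {ι : Type*} [DecidableEq ι] (F : ι → Matrix.SpecialLinearGroup (Fin 2) ℝ)
    (lo hi : ι × Bool → ℝ) (hlt : ∀ x, lo x < hi x)
    (hdis : ∀ x y, x ≠ y → hi x ≤ lo y ∨ hi y ≤ lo x)
    (hF : ∀ (x : ι × Bool) z, 0 < QQ (lo (x.1, !x.2)) (hi (x.1, !x.2)) z →
      QQ (lo x) (hi x) ((cond x.2 (F x.1) (F x.1)⁻¹) • z) < 0)
    (x₀ : ι × Bool) : DiscreteTopology (Subgroup.closure (Set.range F)) := by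
  let U : Set UpperHalfPlane :=
    {z | lo x₀ < z.re ∧ z.re < hi x₀ ∧ 0 < QQ (lo x₀) (hi x₀) z}
  have hUo : IsOpen U := by
    have hre : Continuous UpperHalfPlane.re := UpperHalfPlane.continuous_re
    have him : Continuous UpperHalfPlane.im := UpperHalfPlane.continuous_im
    have hQ : Continuous (QQ (lo x₀) (hi x₀)) := by
      unfold QQ
      fun_prop
    exact (isOpen_lt continuous_const hre).inter ((isOpen_lt hre continuous_const).inter
      (isOpen_lt continuous_const hQ))
  have hUQ : ∀ z ∈ U, ∀ x, 0 < QQ (lo x) (hi x) z := by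
    rintro z ⟨h1, h2, h3⟩ x
    by_cases hx : x₀ = x
    · exact hx ▸ h3
    · exact QQ_disj (hlt _) (hdis _ _ hx) z h1 h2
  have h0 := hlt x₀
  let z₀ : UpperHalfPlane :=
    ⟨⟨(lo x₀ + hi x₀) / 2, hi x₀ - lo x₀⟩, by simpa using h0⟩
  have hz₀ : z₀ ∈ U := by
    have e1 : z₀.re = (lo x₀ + hi x₀) / 2 := rfl
    have e2 : z₀.im = hi x₀ - lo x₀ := rfl
    refine ⟨by rw [e1]; linarith, by rw [e1]; linarith, ?_⟩
    unfold QQ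
    rw [e1, e2]
    nlinarith [mul_pos (sub_pos.2 h0) (sub_pos.2 h0)]
  apply discreteTopology_of_isOpen_singleton_one
  have : ({1} : Set (Subgroup.closure (Set.range F))) =
      (fun γ : Subgroup.closure (Set.range F) =>
        (γ : Matrix.SpecialLinearGroup (Fin 2) ℝ) • z₀) ⁻¹' U := by
    ext ⟨γ, hγ⟩
    simp only [Set.mem_singleton_iff, Set.mem_preimage]
    constructor
    · intro h
      have : γ = 1 := congrArg Subtype.val h
      subst this
      simpa using hz₀
    · intro hU
      rw [Subtype.ext_iff]
      change γ = 1
      rw [← FreeGroup.range_lift_eq_closure] at hγ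
      obtain ⟨w, rfl⟩ := hγ
      have hw : FreeGroup.lift F w =
          (w.toWord.map fun x => cond x.2 (F x.1) (F x.1)⁻¹).prod := by
        conv_lhs => rw [← FreeGroup.mk_toWord (x := w)]
        rw [FreeGroup.lift_mk]
      have hred : FreeGroup.IsReduced w.toWord := FreeGroup.isReduced_toWord
      cases hL : w.toWord with
      | nil => rw [hw, hL]; simp
      | cons x L =>
        exfalso
        rw [hL] at hred
        have h1 := pp_word F lo hi hlt hdis hF z₀ (hUQ _ hz₀) L x hred
        rw [← hL, ← hw] at h1
        have h2 := hUQ _ hU x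
        exact lt_asymm h1 h2
  rw [this]
  exact hUo.preimage (by fun_prop)

/-- the group `G` generated by the `f_n` and `g_n` acts properly
discontinuously on the upper half-plane: for all compact `K, L ⊆ ℍ`, the set of
`γ ∈ G` with `(γ·K) ∩ L ≠ ∅` is finite. -/
theorem stmt16 (a b c d e : ℤ → ℝ)
    (h : ∀ n : ℤ, a n < b n ∧ b n < c n ∧ c n < d n ∧ d n < e n ∧ e n ≤ a (n + 1))
    (G : Subgroup (Matrix.SpecialLinearGroup (Fin 2) ℝ))
    (hG : G = Subgroup.closure
      {g : Matrix.SpecialLinearGroup (Fin 2) ℝ | ∃ n : ℤ,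
        (g : Matrix (Fin 2) (Fin 2) ℝ) = TMat (a n) (b n) (c n) (d n) ∨
        (g : Matrix (Fin 2) (Fin 2) ℝ) = TMat (b n) (c n) (d n) (e n)}) :
    ∀ K L : Set UpperHalfPlane, IsCompact K → IsCompact L →
      {γ : Matrix.SpecialLinearGroup (Fin 2) ℝ |
        γ ∈ G ∧ ((fun z => γ • z) '' K ∩ L).Nonempty}.Finite := by
  let F : ℤ × Bool → Matrix.SpecialLinearGroup (Fin 2) ℝ := fun p =>
    match p with
    | (n, false) => ⟨TMat (a n) (b n) (c n) (d n), TMat_det _ _ _ _ (h n).1 (h n).2.2.1⟩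
    | (n, true) => ⟨TMat (b n) (c n) (d n) (e n), TMat_det _ _ _ _ (h n).2.1 (h n).2.2.2.1⟩
  let lo : (ℤ × Bool) × Bool → ℝ := fun p =>
    match p with
    | ((n, false), false) => a n
    | ((n, false), true) => c n
    | ((n, true), false) => b n
    | ((n, true), true) => d n
  let hi : (ℤ × Bool) × Bool → ℝ := fun p =>
    match p with
    | ((n, false), false) => b n
    | ((n, false), true) => d n
    | ((n, true), false) => c n
    | ((n, true), true) => e n
  have hlt : ∀ x, lo x < hi x := by
    rintro ⟨⟨n, _ | _⟩, _ | _⟩ <;> simp only [lo, hi] <;> grind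
  have hmono : StrictMono a := strictMono_int_of_lt_succ fun n => by
    obtain ⟨h1, h2, h3, h4, h5⟩ := h n
    linarith
  have hloa : ∀ x, a x.1.1 ≤ lo x := by
    rintro ⟨⟨n, _ | _⟩, _ | _⟩ <;> simp only [lo] <;> grind
  have hhie : ∀ x, hi x ≤ a (x.1.1 + 1) := by
    rintro ⟨⟨n, _ | _⟩, _ | _⟩ <;> simp only [hi] <;> grind
  have hdis : ∀ x y, x ≠ y → hi x ≤ lo y ∨ hi y ≤ lo x := by
    intro x y hxy
    rcases lt_trichotomy x.1.1 y.1.1 with hn | hn | hn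
    · left
      exact (hhie x).trans ((hmono.monotone (show x.1.1 + 1 ≤ y.1.1 by omega)).trans (hloa y))
    · obtain ⟨⟨n, i⟩, s⟩ := x
      obtain ⟨⟨m, j⟩, t⟩ := y
      simp only at hn
      subst hn
      obtain ⟨h1, h2, h3, h4, h5⟩ := h n
      cases i <;> cases j <;> cases s <;> cases t <;> simp only [lo, hi] <;>
        first
        | exact absurd rfl hxy
        | (left; linarith)
        | (right; linarith)
    · right
      exact (hhie y).trans ((hmono.monotone (show y.1.1 + 1 ≤ x.1.1 by omega)).trans (hloa x))
  have hF : ∀ (x : (ℤ × Bool) × Bool) z, 0 < QQ (lo (x.1, !x.2)) (hi (x.1, !x.2)) z →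
      QQ (lo x) (hi x) ((cond x.2 (F x.1) (F x.1)⁻¹) • z) < 0 := by
    rintro ⟨⟨n, i⟩, s⟩ z hz
    obtain ⟨h1, h2, h3, h4, h5⟩ := h n
    cases i <;> cases s
    · exact TMat_inv_smul (a n) (b n) (c n) (d n) h1 h3 (F (n, false)) rfl z hz
    · exact TMat_smul (a n) (b n) (c n) (d n) h1 h3 (F (n, false)) rfl z hz
    · exact TMat_inv_smul (b n) (c n) (d n) (e n) h2 h4 (F (n, true)) rfl z hz
    · exact TMat_smul (b n) (c n) (d n) (e n) h2 h4 (F (n, true)) rfl z hz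
  have hset : {g : Matrix.SpecialLinearGroup (Fin 2) ℝ | ∃ n : ℤ,
        (g : Matrix (Fin 2) (Fin 2) ℝ) = TMat (a n) (b n) (c n) (d n) ∨
        (g : Matrix (Fin 2) (Fin 2) ℝ) = TMat (b n) (c n) (d n) (e n)} = Set.range F := by
    ext g
    constructor
    · rintro ⟨n, hg | hg⟩
      · exact ⟨(n, false), Subtype.ext hg.symm⟩
      · exact ⟨(n, true), Subtype.ext hg.symm⟩
    · rintro ⟨⟨n, _ | _⟩, rfl⟩
      · exact ⟨n, Or.inl rfl⟩
      · exact ⟨n, Or.inr rfl⟩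
  have hdisc : DiscreteTopology G := by
    rw [hG, hset]
    exact pp_discrete F lo hi hlt hdis hF ((0, false), false)
  have hpd : ProperlyDiscontinuousSMul G UpperHalfPlane := inferInstance
  intro K L hK hL
  exact (Subgroup.properlyDiscontinuousSMul_iff G).1 hpd hK hL
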